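/- There exists a finite simple graph (on 9 vertices) that is 3-semi-transitive but not semi-transitive: it admits an acyclic orientation such that for every directed path v_0 → v_1 → v_2 → v_3 with the edge v_0 → v_3 present, the edges v_0 → v_2 and v_1 → v_3 are also present, yet it admits no semi-transitive orientation (and hence is not word-representable). -/

import Mathlib

/-!
The witness is the graph `exampleGraph` with 9 vertices and 17 edges. Its vertices are numbered
so that directing each edge towards the larger endpoint gives an acyclic orientation, and a finite
check shows that this orientation has no shortcut of length 3.

No acyclic orientation of it is semi-transitive. In an acyclic semi-transitive one, a directed path
whose endpoints are adjacent must have pairwise adjacent vertices: the edge joining the endpoints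
either closes a directed cycle or is the edge `v 0 → v k` of a shortcut. A tree of case
distinctions on the direction of edges (`Refutation`), each of whose branches ends in a violation of
this rule, excludes them all; the rule is invariant under reversing all arrows, so only the
half with `0 → 4` has to be listed, the other half being its mirror image. `Refutation.sound` turns
the Boolean verification of such a tree into a proof.

Finally, a word-representable graph has an acyclic semi-transitive orientation
(`WordRepresentable.exists_semiTransitive`). If `w` represents `G`, direct `x → y` when every
prefix `p` of `w` satisfies `|p|_y ≤ |p|_x ≤ |p|_y + 1`, which says that `x` and `y` alternate in
`w` and `x` comes first. Along a directed path `v 0 → ⋯ → v k` the counts are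
non-increasing, and the edge `v 0 → v k` bounds their total drop by 1, so every pair `v i`, `v j`
with `i < j` satisfies the same inequalities.
-/

/-! ### Words and orientations -/

/-- Letters `x` and `y` alternate in the word `w` if the subsequence of `w` consisting of
all occurrences of `x` and `y` has no two equal consecutive letters (i.e. is of the form
`xyxy⋯` or `yxyx⋯`). -/
def Alternate {V : Type*} [DecidableEq V] (w : List V) (x y : V) : Prop :=
  (w.filter (fun z => decide (z = x ∨ z = y))).Chain' (· ≠ ·)

/-- A word `w` over `V` represents the simple graph `G` if it contains every letter of `V`
and distinct letters alternate in `w` iff they are adjacent in `G`. -/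
def Represents {V : Type*} [DecidableEq V] (w : List V) (G : SimpleGraph V) : Prop :=
  (∀ v : V, v ∈ w) ∧ ∀ x y : V, x ≠ y → (Alternate w x y ↔ G.Adj x y)

/-- A graph is word-representable if some word represents it. -/
def WordRepresentable {V : Type*} [DecidableEq V] (G : SimpleGraph V) : Prop :=
  ∃ w : List V, Represents w G

/-- An orientation of a simple graph `G`: each edge gets exactly one of its two directions. -/
structure GraphOrientation {V : Type*} (G : SimpleGraph V) where
  dir : V → V → Prop
  adj_iff : ∀ x y, G.Adj x y ↔ (dir x y ∨ dir y x)
  not_both : ∀ x y, ¬(dir x y ∧ dir y x)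

/-- An orientation is acyclic if it has no directed cycle. -/
def GraphOrientation.Acyclic {V : Type*} {G : SimpleGraph V} (o : GraphOrientation G) : Prop :=
  ∀ v : V, ¬ Relation.TransGen o.dir v v

/-- An orientation has no shortcut of length `k` if for every directed path
`v 0 → v 1 → ⋯ → v k` (with `k` edges) such that the edge `v 0 → v k` is present,
all edges `v i → v j` for `i < j` are present. -/
def GraphOrientation.NoShortcutOfLength {V : Type*} {G : SimpleGraph V}
    (o : GraphOrientation G) (k : ℕ) : Prop :=
  ∀ v : Fin (k + 1) → V,
    (∀ i : Fin k, o.dir (v i.castSucc) (v i.succ)) →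
    o.dir (v 0) (v (Fin.last k)) →
    ∀ i j : Fin (k + 1), i < j → o.dir (v i) (v j)

/-- An orientation is semi-transitive if it has no shortcut of any length:
for every directed path `v_1 → ⋯ → v_k`, either the edge `v_1 → v_k` is absent, or it is
present and all edges `v_i → v_j` for `i < j` are present. -/
def GraphOrientation.SemiTransitive {V : Type*} {G : SimpleGraph V}
    (o : GraphOrientation G) : Prop :=
  ∀ k : ℕ, o.NoShortcutOfLength k

/-! ### Word-representable graphs are semi-transitive -/

section Words

variable {V : Type*} [DecidableEq V]

/-- Every prefix of `w` contains as many letters `x` as letters `y`, or exactly one more.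
For `x ≠ y` this says that `x` and `y` alternate in `w`, and `y` does not come first. -/
def Leads (w : List V) (x y : V) : Prop :=
  ∀ p, p <+: w → p.count y ≤ p.count x ∧ p.count x ≤ p.count y + 1

theorem leads_nil (x y : V) : Leads [] x y := by
  intro p hp
  simp [List.prefix_nil.1 hp]

theorem leads_cons_left {x y : V} (h : x ≠ y) (w : List V) :
    Leads (x :: w) x y ↔ Leads w y x := by
  constructor
  · intro H p hp
    have := H (x :: p) (by simpa using hp)
    simp [h] at this
    omega
  · intro H p hp
    rcases List.prefix_cons_iff.1 hp with rfl | ⟨t, rfl, ht⟩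
    · simp
    · have := H t ht
      simp [h]
      omega

theorem not_leads_cons_right {x y : V} (h : x ≠ y) (w : List V) : ¬ Leads (y :: w) x y := by
  intro H
  have := H [y] (by simp)
  simp [h.symm] at this

theorem leads_cons_of_ne {x y z : V} (hx : z ≠ x) (hy : z ≠ y) (w : List V) :
    Leads (z :: w) x y ↔ Leads w x y := by
  constructor
  · intro H p hp
    have := H (z :: p) (by simpa using hp)
    simpa [List.count_cons, hx, hy] using this
  · intro H p hp
    rcases List.prefix_cons_iff.1 hp with rfl | ⟨t, rfl, ht⟩
    · simp
    · simpa [List.count_cons, hx, hy] using H t ht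

/-- Prepending `y` to the word restricted to `x` and `y` forces an alternating word to
start with `x`. -/
theorem leads_iff_isChain (w : List V) : ∀ {x y : V}, x ≠ y →
    (Leads w x y ↔
      (y :: w.filter (fun z => decide (z = x ∨ z = y))).IsChain (· ≠ ·)) := by
  induction w with
  | nil => intro x y _; simp [leads_nil]
  | cons z w ih =>
    intro x y h
    by_cases hx : z = x
    · subst hx
      rw [leads_cons_left h, ih h.symm]
      simp [h.symm, or_comm]
    · by_cases hy : z = y
      · subst hy
        simp [not_leads_cons_right h]
      · rw [leads_cons_of_ne hx hy, ih h]
        simp [hx, hy]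

theorem alternate_iff_leads {x y : V} (h : x ≠ y) (w : List V) :
    Alternate w x y ↔ Leads w x y ∨ Leads w y x := by
  have hswap : w.filter (fun z => decide (z = y ∨ z = x)) =
      w.filter (fun z => decide (z = x ∨ z = y)) := by
    simp only [or_comm]
  rw [leads_iff_isChain w h, leads_iff_isChain w h.symm, hswap]
  change List.IsChain _ _ ↔ _
  have hmem : ∀ z ∈ w.filter (fun z => decide (z = x ∨ z = y)), z = x ∨ z = y := by
    intro z hz
    simpa using (List.mem_filter.1 hz).2
  generalize w.filter (fun z => decide (z = x ∨ z = y)) = l at hmem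
  cases l with
  | nil => simp
  | cons a l =>
    rcases hmem a (by simp) with rfl | rfl
    · simp [h.symm]
    · simp [h]

/-- Two letters of `w` with the same number of occurrences in each prefix coincide, since reading
a letter `x` changes the count of `x` only. -/
theorem Leads.antisymm {w : List V} {x y : V} (hx : x ∈ w) (h₁ : Leads w x y)
    (h₂ : Leads w y x) : x = y := by
  by_contra hne
  obtain ⟨s, t, rfl⟩ := List.append_of_mem hx
  have hs : s <+: s ++ x :: t := List.prefix_append _ _
  have hs' : s ++ [x] <+: s ++ x :: t := ⟨t, by simp⟩
  have a₁ := h₁ s hs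
  have a₂ := h₂ s hs
  have b₂ := h₂ (s ++ [x]) hs'
  simp [List.count_append, hne] at b₂
  omega

theorem WordRepresentable.exists_semiTransitive {G : SimpleGraph V} (h : WordRepresentable G) :
    ∃ o : GraphOrientation G, o.Acyclic ∧ o.SemiTransitive := by
  obtain ⟨w, hw, hG⟩ := h
  let o : GraphOrientation G :=
    { dir := fun x y => x ≠ y ∧ Leads w x y
      adj_iff := by
        intro x y
        by_cases hxy : x = y
        · subst hxy
          simp
        · rw [← hG x y hxy, alternate_iff_leads hxy]
          simp [hxy, Ne.symm hxy]
      not_both := by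
        rintro x y ⟨⟨hne, h₁⟩, -, h₂⟩
        exact hne (h₁.antisymm (hw x) h₂) }
  have hcount : ∀ {x y}, Relation.TransGen o.dir x y → ∀ p, p <+: w → p.count y ≤ p.count x := by
    intro x y hxy p hp
    induction hxy with
    | single h => exact (h.2 p hp).1
    | tail _ h ih => exact (h.2 p hp).1.trans ih
  have hacyc : o.Acyclic := by
    intro v hv
    obtain ⟨u, hvu, huv⟩ := Relation.TransGen.head'_iff.1 hv
    rcases Relation.reflTransGen_iff_eq_or_transGen.1 huv with rfl | huv
    · exact hvu.1 rfl
    · refine hvu.1 (hvu.2.antisymm (hw v) fun p hp => ?_)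
      have := hcount huv p hp
      have := hvu.2 p hp
      omega
  refine ⟨o, hacyc, fun k v hpath hlast i j hij => ?_⟩
  have hlt : ∀ i j : Fin (k + 1), i < j → Relation.TransGen o.dir (v i) (v j) := by
    have key : ∀ n, ∀ i j : Fin (k + 1), j.val = i.val + n + 1 →
        Relation.TransGen o.dir (v i) (v j) := by
      intro n
      induction n with
      | zero =>
        intro i j h
        have hj : j = (⟨i, by omega⟩ : Fin k).succ := Fin.ext h
        rw [hj]
        exact .single (hpath ⟨i, by omega⟩)
      | succ n ih =>
        intro i j h
        have hj : j = (⟨i.val + n + 1, by omega⟩ : Fin k).succ := Fin.ext h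
        rw [hj]
        exact (ih i (⟨i.val + n + 1, by omega⟩ : Fin k).castSucc rfl).tail
          (hpath ⟨i.val + n + 1, by omega⟩)
    intro i j h
    exact key (j.val - i.val - 1) i j (by have : i.val < j.val := h; omega)
  have hle : ∀ i j : Fin (k + 1), i ≤ j → ∀ p, p <+: w → p.count (v j) ≤ p.count (v i) := by
    intro i j h p hp
    rcases h.eq_or_lt with rfl | h
    · exact le_rfl
    · exact hcount (hlt i j h) p hp
  refine ⟨fun heq => hacyc (v i) ?_, fun p hp => ⟨hle i j hij.le p hp, ?_⟩⟩
  · have := hlt i j hij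
    rwa [← heq] at this
  · have h₀ := hle 0 i (Fin.zero_le i) p hp
    have h₁ := hle j (Fin.last k) (Fin.le_last j) p hp
    have h₂ := (hlast.2 p hp).2
    omega

end Words

/-! ### Refuting semi-transitive orientations -/

section Refutations

variable {n : ℕ}

/-- In an acyclic semi-transitive orientation, the vertices of a directed path with adjacent
endpoints are pairwise adjacent. -/
theorem GraphOrientation.SemiTransitive.pairwise_adj {V : Type*} {G : SimpleGraph V}
    {o : GraphOrientation G} (hst : o.SemiTransitive) (hac : o.Acyclic) {a : V} {l : List V}
    (hchain : (a :: l).IsChain o.dir) (hadj : G.Adj a ((a :: l).getLast (by simp))) :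
    (a :: l).Pairwise G.Adj := by
  rcases (o.adj_iff _ _).1 hadj with h | h
  · rw [List.pairwise_iff_getElem]
    intro i j hi hj hij
    rw [o.adj_iff]
    left
    refine hst l.length (fun i => (a :: l).get i) (fun i => ?_) ?_
      ⟨i, by simpa using hi⟩ ⟨j, by simpa using hj⟩ hij
    · exact List.isChain_iff_getElem.1 hchain i.val (by simp)
    · simpa [List.getLast_eq_getElem] using h
  · have := List.relationReflTransGen_of_exists_isChain_cons l hchain rfl
    exact absurd (Relation.TransGen.tail' this h) (hac a)

/-- A tree of case distinctions showing that an orientation is not both acyclic and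
semi-transitive. -/
inductive Refutation (n : ℕ) : Type
  /-- Distinguish the cases `a → b` and `b → a` for an edge `ab`. -/
  | split (a b : Fin n) (s t : Refutation n) : Refutation n
  /-- The listed vertices form a directed path with adjacent endpoints, but are not pairwise
  adjacent. -/
  | path (l : List (Fin n)) : Refutation n

namespace Refutation

/-- The refutation for the reversed orientations. -/
def reverse : Refutation n → Refutation n
  | split a b s t => split b a s.reverse t.reverse
  | path l => path l.reverse

/-- Whether the tree refutes all orientations of `G` containing the arrows in the list. -/
def check (G : SimpleGraph (Fin n)) [DecidableRel G.Adj] :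
    List (Fin n × Fin n) → Refutation n → Bool
  | L, split a b s t => decide (G.Adj a b) && s.check G ((a, b) :: L) && t.check G ((b, a) :: L)
  | _, path [] => false
  | L, path (a :: l) =>
    decide ((a :: l).IsChain (fun x y => (x, y) ∈ L)) &&
    decide (G.Adj a ((a :: l).getLast (by simp))) && !decide ((a :: l).Pairwise G.Adj)

theorem sound {G : SimpleGraph (Fin n)} [DecidableRel G.Adj] {o : GraphOrientation G}
    (hac : o.Acyclic) (hst : o.SemiTransitive) (r : Refutation n) :
    ∀ L : List (Fin n × Fin n), (∀ e ∈ L, o.dir e.1 e.2) → r.check G L = true → False := by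
  induction r with
  | split a b s t ihs iht =>
    intro L hL h
    simp only [check, Bool.and_eq_true, decide_eq_true_eq] at h
    obtain ⟨⟨hab, hs⟩, ht⟩ := h
    rcases (o.adj_iff a b).1 hab with hd | hd
    · exact ihs _ (List.forall_mem_cons.2 ⟨hd, hL⟩) hs
    · exact iht _ (List.forall_mem_cons.2 ⟨hd, hL⟩) ht
  | path l =>
    intro L hL h
    cases l with
    | nil => simp [check] at h
    | cons a l =>
      simp only [check, Bool.and_eq_true, decide_eq_true_eq, Bool.not_eq_true',
        decide_eq_false_iff_not] at h
      obtain ⟨⟨hchain, hadj⟩, hnot⟩ := h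
      exact hnot (hst.pairwise_adj hac (hchain.imp fun x y hxy => hL _ hxy) hadj)

end Refutation

end Refutations

/-! ### The graph -/

/-- The edges of the example, each written with its smaller endpoint first. -/
def exampleEdges : List (Fin 9 × Fin 9) :=
  [(0, 4), (0, 5), (0, 6), (0, 8), (1, 3), (1, 4), (1, 7), (2, 4), (2, 7), (2, 8), (3, 5),
    (3, 8), (4, 7), (4, 8), (5, 6), (5, 8), (6, 7)]

/-- The graph with edges `exampleEdges`. -/
def exampleGraph : SimpleGraph (Fin 9) where
  Adj x y := (x, y) ∈ exampleEdges ∨ (y, x) ∈ exampleEdges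
  symm := ⟨fun _ _ h => h.symm⟩
  loopless := ⟨by decide⟩

instance : DecidableRel exampleGraph.Adj := fun x y =>
  inferInstanceAs (Decidable ((x, y) ∈ exampleEdges ∨ (y, x) ∈ exampleEdges))

theorem lt_of_mem_exampleEdges : ∀ x y : Fin 9, (x, y) ∈ exampleEdges → x < y := by decide

/-- The orientation of each edge towards its larger endpoint. -/
def exampleOrientation : GraphOrientation exampleGraph where
  dir x y := (x, y) ∈ exampleEdges
  adj_iff _ _ := Iff.rfl
  not_both x y h :=
    lt_asymm (lt_of_mem_exampleEdges x y h.1) (lt_of_mem_exampleEdges y x h.2)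

theorem exampleOrientation_acyclic : exampleOrientation.Acyclic := by
  have hlt : ∀ x y, Relation.TransGen exampleOrientation.dir x y → x < y := by
    intro x y h
    induction h with
    | single h => exact lt_of_mem_exampleEdges _ _ h
    | tail _ h ih => exact ih.trans (lt_of_mem_exampleEdges _ _ h)
  exact fun v hv => lt_irrefl v (hlt v v hv)

theorem exampleOrientation_noShortcut : exampleOrientation.NoShortcutOfLength 3 := by
  have key : ∀ e ∈ exampleEdges, ∀ f ∈ exampleEdges, e.2 = f.1 → ∀ g ∈ exampleEdges, f.2 = g.1 →
      (e.1, g.2) ∈ exampleEdges → (e.1, f.2) ∈ exampleEdges ∧ (f.1, g.2) ∈ exampleEdges := by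
    decide +kernel
  intro v hpath hlast i j hij
  have h01 : (v 0, v 1) ∈ exampleEdges := hpath 0
  have h12 : (v 1, v 2) ∈ exampleEdges := hpath 1
  have h23 : (v 2, v 3) ∈ exampleEdges := hpath 2
  have h03 : (v 0, v 3) ∈ exampleEdges := hlast
  obtain ⟨h02, h13⟩ := key _ h01 _ h12 rfl _ h23 rfl h03
  change (v i, v j) ∈ exampleEdges
  fin_cases i <;> fin_cases j <;> first | assumption | exact absurd hij (by decide)

/-- A refutation of the orientations of `exampleGraph` with `0 → 4`. -/
def exampleRefutation : Refutation 9 :=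
  .split 4 8
   (.split 5 8
    (.split 0 5
     (.split 4 7
      (.split 6 7
       (.split 5 6
        (.split 1 7
         (.split 1 4
          (.split 3 8
           (.split 3 5
            (.split 1 3 (.path [1, 3, 5, 6, 7]) (.path [3, 1, 4, 8]))
            (.path [0, 5, 3, 8]))
           (.path [1, 4, 8, 3]))
          (.split 2 8
           (.split 2 4 (.path [2, 4, 1, 7]) (.path [0, 4, 2, 8]))
           (.split 2 7 (.path [4, 8, 2, 7]) (.path [4, 1, 7, 2]))))
         (.split 3 8
          (.split 3 5 (.path [3, 5, 6, 7, 1]) (.path [0, 5, 3, 8]))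
          (.split 1 3 (.path [5, 6, 7, 1, 3]) (.path [4, 8, 3, 1]))))
        (.split 0 6 (.path [0, 6, 5, 8]) (.path [6, 0, 4, 7])))
       (.path [0, 4, 7, 6]))
      (.split 2 8
       (.split 2 7
        (.path [2, 7, 4, 8])
        (.split 2 4
         (.split 1 7
          (.path [1, 7, 2, 4])
          (.split 1 4
           (.split 3 8
            (.split 3 5
             (.split 1 3
              (.split 6 7
               (.path [6, 7, 1, 3, 5])
               (.split 5 6
                (.path [7, 1, 3, 5, 6])
                (.split 0 6 (.path [0, 6, 5, 8]) (.path [7, 6, 0, 4]))))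
              (.path [3, 1, 4, 8]))
             (.path [0, 5, 3, 8]))
            (.path [1, 4, 8, 3]))
           (.path [7, 2, 4, 1])))
         (.path [0, 4, 2, 8])))
       (.path [7, 4, 8, 2])))
     (.path [5, 0, 4, 8]))
    (.path [0, 4, 8, 5]))
   (.split 0 8
    (.split 1 4
     (.split 4 7
      (.split 2 8
       (.path [2, 8, 4, 7])
       (.split 2 7
        (.split 2 4 (.path [0, 8, 2, 4]) (.path [1, 4, 2, 7]))
        (.path [8, 4, 7, 2])))
      (.split 1 7
       (.split 5 8
        (.split 0 5
         (.path [0, 5, 8, 4])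
         (.split 3 8
          (.split 3 5
           (.path [3, 5, 0, 8])
           (.split 1 3
            (.path [1, 3, 8, 4])
            (.split 6 7
             (.split 5 6
              (.split 0 6 (.path [0, 6, 7, 4]) (.path [5, 6, 0, 8]))
              (.path [6, 5, 3, 1, 7]))
             (.path [5, 3, 1, 7, 6]))))
          (.path [5, 0, 8, 3])))
        (.split 6 7
         (.split 0 6 (.path [0, 6, 7, 4]) (.path [6, 0, 8, 5]))
         (.split 5 6
          (.path [0, 8, 5, 6])
          (.split 3 8
           (.split 1 3 (.path [1, 3, 8, 4]) (.path [3, 1, 7, 6, 5]))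
           (.split 3 5 (.path [0, 8, 3, 5]) (.path [1, 7, 6, 5, 3]))))))
       (.split 2 8
        (.split 2 7 (.path [2, 7, 1, 4]) (.path [7, 2, 8, 4]))
        (.split 2 4 (.path [0, 8, 2, 4]) (.path [7, 1, 4, 2])))))
     (.split 3 8
      (.path [3, 8, 4, 1])
      (.split 5 8
       (.split 0 5 (.path [0, 5, 8, 4]) (.path [5, 0, 8, 3]))
       (.split 5 6
        (.path [0, 8, 5, 6])
        (.split 3 5
         (.path [0, 8, 3, 5])
         (.split 1 3
          (.path [8, 4, 1, 3])
          (.split 6 7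
           (.split 4 7
            (.split 2 8
             (.path [2, 8, 4, 7])
             (.split 2 7
              (.split 2 4
               (.path [0, 8, 2, 4])
               (.split 1 7 (.path [6, 5, 3, 1, 7]) (.path [4, 2, 7, 1])))
              (.path [8, 4, 7, 2])))
            (.split 0 6 (.path [0, 6, 7, 4]) (.path [6, 0, 8, 5])))
           (.path [7, 6, 5, 3, 1]))))))))
    (.split 2 8
     (.path [2, 8, 0, 4])
     (.split 2 4
      (.split 5 8
       (.split 5 6
        (.split 0 6
         (.path [5, 8, 0, 6])
         (.split 6 7
          (.split 4 7
           (.path [6, 0, 4, 7])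
           (.split 2 7
            (.path [8, 2, 7, 4])
            (.split 1 7
             (.path [1, 7, 2, 4])
             (.split 3 8
              (.split 3 5 (.path [3, 5, 6, 7, 1]) (.path [5, 3, 8, 0]))
              (.split 1 4
               (.split 1 3 (.path [5, 6, 7, 1, 3]) (.path [8, 3, 1, 4]))
               (.path [7, 2, 4, 1]))))))
          (.path [7, 6, 0, 4])))
        (.path [6, 5, 8, 0]))
       (.split 0 5
        (.split 3 8
         (.path [3, 8, 0, 5])
         (.split 3 5
          (.split 4 7
           (.split 6 7
            (.split 5 6
             (.split 1 7
              (.split 1 4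
               (.split 1 3 (.path [1, 3, 5, 6, 7]) (.path [8, 3, 1, 4]))
               (.path [2, 4, 1, 7]))
              (.path [3, 5, 6, 7, 1]))
             (.split 0 6 (.path [8, 0, 6, 5]) (.path [6, 0, 4, 7])))
            (.path [0, 4, 7, 6]))
           (.split 2 7
            (.path [8, 2, 7, 4])
            (.split 1 7
             (.path [1, 7, 2, 4])
             (.split 1 4
              (.split 1 3
               (.split 6 7
                (.path [6, 7, 1, 3, 5])
                (.split 5 6
                 (.path [7, 1, 3, 5, 6])
                 (.split 0 6 (.path [8, 0, 6, 5]) (.path [7, 6, 0, 4]))))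
               (.path [8, 3, 1, 4]))
              (.path [7, 2, 4, 1])))))
          (.path [8, 0, 5, 3])))
        (.path [8, 5, 0, 4])))
      (.path [8, 0, 4, 2]))))

theorem exampleGraph_not_semiTransitive :
    ¬ ∃ o : GraphOrientation exampleGraph, o.Acyclic ∧ o.SemiTransitive := by
  rintro ⟨o, hac, hst⟩
  exact (Refutation.split 0 4 exampleRefutation exampleRefutation.reverse).sound hac hst []
    (by simp) (by decide +kernel)

/-- There is a simple graph on 9 vertices that is 3-semi-transitive (admits an acyclic
orientation with no shortcut of length 3) but not semi-transitive (admits no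
semi-transitive orientation), and hence is not word-representable. -/
theorem exists_three_semiTransitive_not_semiTransitive :
    ∃ G : SimpleGraph (Fin 9),
      (∃ o : GraphOrientation G, o.Acyclic ∧ o.NoShortcutOfLength 3) ∧
      ¬ (∃ o : GraphOrientation G, o.Acyclic ∧ o.SemiTransitive) ∧
      ¬ WordRepresentable G := by
  exact ⟨exampleGraph, ⟨exampleOrientation, exampleOrientation_acyclic,
    exampleOrientation_noShortcut⟩, exampleGraph_not_semiTransitive,
    fun h => exampleGraph_not_semiTransitive h.exists_semiTransitive⟩
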